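/- Let n ≥ 4 and let 0 < γ < γ*(n). Then there exist constants c ∈ (0, 1/2), ε₀ ∈ (0, 1) and C > 0, depending only on n and γ, with the following property. For every ε ∈ (0, ε₀), set V = {x ∈ ℝⁿ : ‖x‖ ≤ c, ‖x − (1+ε)eₙ‖ ≥ 1, ‖x + (1+ε)eₙ‖ ≥ 1}. Suppose u : ℝⁿ → ℝ is C² on an open set containing V, Δu = 0 at every point of the interior of V, and u satisfies the Neumann conditions ⟨∇u(x), x − (1+ε)eₙ⟩ = 0 for every x ∈ V with ‖x − (1+ε)eₙ‖ = 1 and ⟨∇u(x), x + (1+ε)eₙ⟩ = 0 for every x ∈ V with ‖x + (1+ε)eₙ‖ = 1. Then for every x ∈ V, (ε + |x'|²)^{1−γ} ‖∇u(x)‖² ≤ C · sup{ ‖∇u(y)‖² : y ∈ V, ‖y‖ = c }. (This is the maximum-principle form of the main gradient estimate |∇u|(x) ≤ C‖φ‖_{C^{1,α}(∂Ω)} (ε+|x'|²)^{−(1−γ)/2} of Theorem 1.1.) -/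

import Mathlib

open scoped RealInnerProductSpace

/-- `γ*(n)`: the unique positive root of `(n−2)t² + (n²−4n+5)t − (n²−5n+5) = 0` for `n ≥ 4`. -/
noncomputable def gammaStar (n : ℕ) : ℝ :=
  (-((n : ℝ) ^ 2 - 4 * n + 5) +
      Real.sqrt (((n : ℝ) ^ 2 - 4 * n + 5) ^ 2 + 4 * ((n : ℝ) - 2) * ((n : ℝ) ^ 2 - 5 * n + 5))) /
    (2 * ((n : ℝ) - 2))

open Filter Topology Set

/-- The second directional derivative of `F` at `x` along `e`. -/
noncomputable def sndDirDeriv {E : Type*} [NormedAddCommGroup E] [NormedSpace ℝ E] (e : E)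
    (F : E → ℝ) (x : E) : ℝ :=
  fderiv ℝ (fun y => fderiv ℝ F y e) x e

section SndDirDeriv

variable {E : Type*} [NormedAddCommGroup E] [NormedSpace ℝ E] {F G : E → ℝ} {x : E}

lemma ContDiffAt.eventually_differentiableAt_of_two (hF : ContDiffAt ℝ 2 F x) :
    ∀ᶠ y in 𝓝 x, DifferentiableAt ℝ F y :=
  (hF.eventually (by simp)).mono fun _ hy => hy.differentiableAt (by simp)

lemma ContDiffAt.fderiv_apply_const (hF : ContDiffAt ℝ 2 F x) (e : E) :
    ContDiffAt ℝ 1 (fun y => fderiv ℝ F y e) x :=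
  (hF.fderiv_right (m := 1) (by norm_num)).clm_apply contDiffAt_const

lemma ContDiffAt.differentiableAt_fderiv_apply (hF : ContDiffAt ℝ 2 F x) (e : E) :
    DifferentiableAt ℝ (fun y => fderiv ℝ F y e) x :=
  (hF.fderiv_apply_const e).differentiableAt (by simp)

lemma sndDirDeriv_mul (hF : ContDiffAt ℝ 2 F x) (hG : ContDiffAt ℝ 2 G x) (e : E) :
    sndDirDeriv e (fun y => F y * G y) x =
      sndDirDeriv e F x * G x + 2 * (fderiv ℝ F x e * fderiv ℝ G x e) +
        F x * sndDirDeriv e G x := by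
  have h1 : (fun y => fderiv ℝ (fun y => F y * G y) y e) =ᶠ[𝓝 x]
      fun y => F y * fderiv ℝ G y e + G y * fderiv ℝ F y e := by
    filter_upwards [hF.eventually_differentiableAt_of_two,
      hG.eventually_differentiableAt_of_two] with y hy1 hy2
    simp [fderiv_fun_mul hy1 hy2]
  have dF := hF.differentiableAt (by simp)
  have dG := hG.differentiableAt (by simp)
  have d1 := hF.differentiableAt_fderiv_apply e
  have d2 := hG.differentiableAt_fderiv_apply e
  rw [sndDirDeriv, h1.fderiv_eq, fderiv_fun_add (dF.fun_mul d2) (dG.fun_mul d1),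
    fderiv_fun_mul dF d2, fderiv_fun_mul dG d1]
  simp only [sndDirDeriv, add_apply, smul_apply, smul_eq_mul]
  ring

lemma sndDirDeriv_sub (hF : ContDiffAt ℝ 2 F x) (hG : ContDiffAt ℝ 2 G x) (e : E) :
    sndDirDeriv e (fun y => F y - G y) x = sndDirDeriv e F x - sndDirDeriv e G x := by
  have h1 : (fun y => fderiv ℝ (fun y => F y - G y) y e) =ᶠ[𝓝 x]
      fun y => fderiv ℝ F y e - fderiv ℝ G y e := by
    filter_upwards [hF.eventually_differentiableAt_of_two,
      hG.eventually_differentiableAt_of_two] with y hy1 hy2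
    simp [fderiv_fun_sub hy1 hy2]
  rw [sndDirDeriv, h1.fderiv_eq, fderiv_fun_sub (hF.differentiableAt_fderiv_apply e)
    (hG.differentiableAt_fderiv_apply e)]
  rfl

lemma sndDirDeriv_sum {ι : Type*} (s : Finset ι) {F : ι → E → ℝ}
    (hF : ∀ i, ContDiffAt ℝ 2 (F i) x) (e : E) :
    sndDirDeriv e (fun y => ∑ i ∈ s, F i y) x = ∑ i ∈ s, sndDirDeriv e (F i) x := by
  have h0 : ∀ i ∈ s, ∀ᶠ y in 𝓝 x, DifferentiableAt ℝ (F i) y :=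
    fun i _ => (hF i).eventually_differentiableAt_of_two
  have h1 : (fun y => fderiv ℝ (fun y => ∑ i ∈ s, F i y) y e) =ᶠ[𝓝 x]
      fun y => ∑ i ∈ s, fderiv ℝ (F i) y e := by
    filter_upwards [(Filter.eventually_all_finset s).2 h0] with y hy
    rw [fderiv_fun_sum hy]
    simp
  rw [sndDirDeriv, h1.fderiv_eq, fderiv_fun_sum fun i _ => (hF i).differentiableAt_fderiv_apply e]
  simp [sndDirDeriv]

lemma sndDirDeriv_const_mul (hF : ContDiffAt ℝ 2 F x) (a : ℝ) (e : E) :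
    sndDirDeriv e (fun y => a * F y) x = a * sndDirDeriv e F x := by
  have h1 : (fun y => fderiv ℝ (fun y => a * F y) y e) =ᶠ[𝓝 x] fun y => a * fderiv ℝ F y e := by
    filter_upwards [hF.eventually_differentiableAt_of_two] with y hy
    simp [fderiv_const_mul hy]
  rw [sndDirDeriv, h1.fderiv_eq, fderiv_const_mul (hF.differentiableAt_fderiv_apply e)]
  rfl

lemma sndDirDeriv_comp_add_right (F : E → ℝ) (a e x : E) :
    sndDirDeriv e (fun y => F (y + a)) x = sndDirDeriv e F (x + a) := by
  simp only [sndDirDeriv, fderiv_comp_add_right]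
  rw [fderiv_comp_add_right (f := fun y => fderiv ℝ F y e) a]

lemma sndDirDeriv_nonpos_of_isLocalMax (hF : ContDiffAt ℝ 2 F x) (hmax : IsLocalMax F x) (e : E) :
    sndDirDeriv e F x ≤ 0 := by
  by_contra! hpos
  set l : ℝ → E := fun s => x + s • e with hl
  have hl0 : l 0 = x := by simp [hl]
  have hlc : Tendsto l (𝓝 0) (𝓝 x) := by
    have : Continuous l := by fun_prop
    simpa [hl0] using this.tendsto 0
  have hld : ∀ s, HasDerivAt l e s := fun s => by
    simpa [hl] using ((hasDerivAt_id s).smul_const e).const_add x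
  have hd1 : ∀ᶠ s in 𝓝 (0 : ℝ), HasDerivAt (F ∘ l) (fderiv ℝ F (l s) e) s := by
    filter_upwards [hlc.eventually hF.eventually_differentiableAt_of_two] with s hs
    exact hs.hasFDerivAt.comp_hasDerivAt s (hld s)
  have hd1' : deriv (F ∘ l) =ᶠ[𝓝 0] fun s => fderiv ℝ F (l s) e :=
    hd1.mono fun s hs => hs.deriv
  have hd2 : HasDerivAt (fun s => fderiv ℝ F (l s) e) (sndDirDeriv e F x) 0 := by
    have := hF.differentiableAt_fderiv_apply e
    rw [← hl0] at this
    have := this.hasFDerivAt.comp_hasDerivAt (0 : ℝ) (hld 0)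
    rw [hl0] at this
    exact this
  have hd2' : deriv (deriv (F ∘ l)) 0 = sndDirDeriv e F x := by
    rw [hd1'.deriv_eq, hd2.deriv]
  have hmax' : IsLocalMax (F ∘ l) 0 := by
    have := hlc.eventually hmax
    filter_upwards [this] with s hs
    simpa [hl0] using hs
  have hmin : IsLocalMin (F ∘ l) 0 :=
    isLocalMin_of_deriv_deriv_pos (by rw [hd2']; exact hpos) hmax'.deriv_eq_zero
      hd1.self_of_nhds.continuousAt
  have hconst : F ∘ l =ᶠ[𝓝 0] fun _ => (F ∘ l) 0 := by
    filter_upwards [hmax', hmin] with s h1 h2 using le_antisymm h1 h2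
  have h0 : deriv (F ∘ l) =ᶠ[𝓝 0] fun _ => 0 := by
    have := hconst.deriv
    simpa using this
  rw [← hd2', h0.deriv_eq] at hpos
  simp at hpos

end SndDirDeriv

lemma ContDiffAt.tendsto_diffQuot {E : Type*} [NormedAddCommGroup E] [NormedSpace ℝ E]
    {h : E → ℝ} {x : E} (hh : ContDiffAt ℝ 1 h x) {t : ℕ → ℝ} {y : ℕ → E} (ht0 : ∀ k, t k ≠ 0)
    (ht : Tendsto t atTop (𝓝 0)) (hy : Tendsto y atTop (𝓝 x)) (e : E) :
    Tendsto (fun k => (t k)⁻¹ * (h (y k + t k • e) - h (y k))) atTop (𝓝 (fderiv ℝ h x e)) := by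
  have hs := (hh.hasStrictFDerivAt (by simp)).isLittleO
  have hy' : Tendsto (fun k => y k + t k • e) atTop (𝓝 x) := by
    simpa using hy.add (ht.smul_const e)
  have ho := hs.comp_tendsto (hy'.prodMk_nhds hy)
  have hO : (fun k => h (y k + t k • e) - h (y k) - fderiv ℝ h x (t k • e)) =o[atTop] t := by
    have h1 : (fun k => h (y k + t k • e) - h (y k) - fderiv ℝ h x (t k • e)) =o[atTop]
        fun k => t k • e := by
      simpa [Function.comp_def] using ho
    refine h1.trans_isBigO (Asymptotics.IsBigO.of_bound ‖e‖ (Eventually.of_forall fun k => ?_))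
    rw [norm_smul, mul_comm]
  have h2 := hO.tendsto_div_nhds_zero.add_const (fderiv ℝ h x e)
  rw [zero_add] at h2
  refine h2.congr fun k => ?_
  have := ht0 k
  simp only [map_smul, smul_eq_mul]
  field_simp
  ring

/-- The Bochner inequality at a local maximum of `w |∇u|²`, for a harmonic function `u` that is
only known to be `C²`. -/
lemma bochner_nonpos_of_isLocalMax {n : ℕ} {u w : EuclideanSpace ℝ (Fin n) → ℝ}
    {x₀ : EuclideanSpace ℝ (Fin n)} (hu : ContDiffAt ℝ 2 u x₀)
    (hΔ : ∀ᶠ x in 𝓝 x₀, ∑ k, sndDirDeriv (EuclideanSpace.single k (1 : ℝ)) u x = 0)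
    (hw : ContDiffAt ℝ 2 w x₀)
    (hmax : IsLocalMax
      (fun x => w x * ∑ i, (fderiv ℝ u x (EuclideanSpace.single i 1)) ^ 2) x₀) :
    ∑ k, ∑ i, (sndDirDeriv (EuclideanSpace.single k (1 : ℝ)) w x₀ *
          (fderiv ℝ u x₀ (EuclideanSpace.single i 1)) ^ 2 +
        4 * fderiv ℝ w x₀ (EuclideanSpace.single k 1) * fderiv ℝ u x₀ (EuclideanSpace.single i 1) *
          fderiv ℝ (fun y => fderiv ℝ u y (EuclideanSpace.single k 1)) x₀
            (EuclideanSpace.single i 1) +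
        2 * w x₀ * (fderiv ℝ (fun y => fderiv ℝ u y (EuclideanSpace.single k 1)) x₀
            (EuclideanSpace.single i 1)) ^ 2) ≤ 0 := by
  set e : Fin n → EuclideanSpace ℝ (Fin n) := fun i => EuclideanSpace.single i 1 with he
  have he1 : ∀ i, ‖e i‖ = 1 := fun i => by simp [he]
  change ∀ᶠ x in 𝓝 x₀, ∑ k, sndDirDeriv (e k) u x = 0 at hΔ
  change IsLocalMax (fun x => w x * ∑ i, (fderiv ℝ u x (e i)) ^ 2) x₀ at hmax
  change ∑ k, ∑ i, (sndDirDeriv (e k) w x₀ * (fderiv ℝ u x₀ (e i)) ^ 2 +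
        4 * fderiv ℝ w x₀ (e k) * fderiv ℝ u x₀ (e i) *
          fderiv ℝ (fun y => fderiv ℝ u y (e k)) x₀ (e i) +
        2 * w x₀ * (fderiv ℝ (fun y => fderiv ℝ u y (e k)) x₀ (e i)) ^ 2) ≤ 0
  obtain ⟨R, hR, hball⟩ := Metric.eventually_nhds_iff_ball.1
    (((hu.eventually (by simp)).and hΔ).and ((hw.eventually (by simp)).and hmax))
  -- the quotients `g t i` are harmonic and `C²`, unlike the derivatives they approximate
  set g : ℝ → Fin n → EuclideanSpace ℝ (Fin n) → ℝ :=
    fun t i x => t⁻¹ * (u (x + t • e i) - u x) with hg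
  set r : ℝ := R / 2 with hr
  have hmem : ∀ x ∈ Metric.closedBall x₀ r, x ∈ Metric.ball x₀ R := fun x hx => by
    rw [Metric.mem_closedBall] at hx
    rw [Metric.mem_ball]; linarith
  have hmem' : ∀ x ∈ Metric.closedBall x₀ r, ∀ t, 0 < t → t < r → ∀ i,
      x + t • e i ∈ Metric.ball x₀ R := fun x hx t ht htr i => by
    rw [Metric.mem_closedBall, dist_eq_norm] at hx
    rw [Metric.mem_ball, dist_eq_norm]
    calc ‖x + t • e i - x₀‖ = ‖(x - x₀) + t • e i‖ := by congr 1; abel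
      _ ≤ ‖x - x₀‖ + ‖t • e i‖ := norm_add_le _ _
      _ < R := by rw [norm_smul, he1, Real.norm_of_nonneg ht.le]; linarith
  have hshift : ∀ x ∈ Metric.closedBall x₀ r, ∀ t, 0 < t → t < r → ∀ i,
      ContDiffAt ℝ 2 (fun y => u (y + t • e i)) x := fun x hx t ht htr i =>
    ContDiffAt.comp (g := u) (f := fun y => y + t • e i) x
      (hball _ (hmem' x hx t ht htr i)).1.1 (contDiffAt_id.add contDiffAt_const)
  have hgC : ∀ x ∈ Metric.closedBall x₀ r, ∀ t, 0 < t → t < r → ∀ i, ContDiffAt ℝ 2 (g t i) x :=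
    fun x hx t ht htr i =>
      contDiffAt_const.mul ((hshift x hx t ht htr i).sub (hball x (hmem x hx)).1.1)
  have hgd : ∀ x ∈ Metric.closedBall x₀ r, ∀ t, 0 < t → t < r → ∀ i v,
      fderiv ℝ (g t i) x v = t⁻¹ * (fderiv ℝ u (x + t • e i) v - fderiv ℝ u x v) := by
    intro x hx t ht htr i v
    have h1 := (hshift x hx t ht htr i).differentiableAt (by simp)
    have h2 := (hball x (hmem x hx)).1.1.differentiableAt (by simp)
    rw [hg, fderiv_const_mul (h1.fun_sub h2), fderiv_fun_sub h1 h2, fderiv_comp_add_right]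
    simp
  have hgΔ : ∀ x ∈ Metric.closedBall x₀ r, ∀ t, 0 < t → t < r → ∀ i,
      ∑ k, sndDirDeriv (e k) (g t i) x = 0 := by
    intro x hx t ht htr i
    have h1 := hshift x hx t ht htr i
    have h2 := (hball x (hmem x hx)).1
    have h3 := (hball _ (hmem' x hx t ht htr i)).1.2
    have : ∀ k, sndDirDeriv (e k) (g t i) x =
        t⁻¹ * (sndDirDeriv (e k) u (x + t • e i) - sndDirDeriv (e k) u x) := fun k => by
      rw [hg, sndDirDeriv_const_mul (h1.sub h2.1), sndDirDeriv_sub h1 h2.1,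
        sndDirDeriv_comp_add_right]
    simp_rw [this, ← Finset.mul_sum, Finset.sum_sub_distrib, h2.2, h3]
    simp
  set P : EuclideanSpace ℝ (Fin n) → ℝ := fun x => ‖x - x₀‖ ^ 2 * ‖x - x₀‖ ^ 2 with hP
  have hp : ContDiff ℝ 2 (fun x : EuclideanSpace ℝ (Fin n) => ‖x - x₀‖ ^ 2) :=
    (contDiff_id.sub contDiff_const).norm_sq ℝ
  have hPC : ContDiff ℝ 2 P := hp.mul hp
  have hP0 : ∀ k, sndDirDeriv (e k) P x₀ = 0 := fun k => by
    rw [hP, sndDirDeriv_mul hp.contDiffAt hp.contDiffAt]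
    have hmin : IsLocalMin (fun x : EuclideanSpace ℝ (Fin n) => ‖x - x₀‖ ^ 2) x₀ :=
      Eventually.of_forall fun y => by simp
    simp [hmin.fderiv_eq_zero]
  set Φ : ℝ → EuclideanSpace ℝ (Fin n) → ℝ := fun t x => w x * ∑ i, g t i x * g t i x - P x with hΦ
  have hsumC : ∀ x ∈ Metric.closedBall x₀ r, ∀ t, 0 < t → t < r →
      ContDiffAt ℝ 2 (fun x => ∑ i, g t i x * g t i x) x := fun x hx t ht htr =>
    ContDiffAt.sum fun i _ => (hgC x hx t ht htr i).mul (hgC x hx t ht htr i)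
  have hwC : ∀ x ∈ Metric.closedBall x₀ r, ContDiffAt ℝ 2 w x := fun x hx =>
    (hball x (hmem x hx)).2.1
  have hΦC : ∀ x ∈ Metric.closedBall x₀ r, ∀ t, 0 < t → t < r → ContDiffAt ℝ 2 (Φ t) x :=
    fun x hx t ht htr => ((hwC x hx).mul (hsumC x hx t ht htr)).sub hPC.contDiffAt
  have hΦΔ : ∀ x ∈ Metric.closedBall x₀ r, ∀ t, 0 < t → t < r →
      ∑ k, sndDirDeriv (e k) (Φ t) x =
        ∑ k, ∑ i, (sndDirDeriv (e k) w x * (g t i x) ^ 2 +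
          4 * fderiv ℝ w x (e k) * g t i x * fderiv ℝ (g t i) x (e k) +
          2 * w x * (fderiv ℝ (g t i) x (e k)) ^ 2) - ∑ k, sndDirDeriv (e k) P x := by
    intro x hx t ht htr
    have h0 : ∀ k, sndDirDeriv (e k) (Φ t) x =
        ∑ i, (sndDirDeriv (e k) w x * (g t i x) ^ 2 +
          4 * fderiv ℝ w x (e k) * g t i x * fderiv ℝ (g t i) x (e k) +
          2 * w x * (fderiv ℝ (g t i) x (e k)) ^ 2) - sndDirDeriv (e k) P x +
        ∑ i, 2 * w x * g t i x * sndDirDeriv (e k) (g t i) x := by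
      intro k
      have hd : ∀ i, DifferentiableAt ℝ (g t i) x := fun i =>
        (hgC x hx t ht htr i).differentiableAt (by simp)
      rw [hΦ, sndDirDeriv_sub ((hwC x hx).mul (hsumC x hx t ht htr)) hPC.contDiffAt,
        sndDirDeriv_mul (hwC x hx) (hsumC x hx t ht htr),
        sndDirDeriv_sum _ fun i => (hgC x hx t ht htr i).mul (hgC x hx t ht htr i),
        fderiv_fun_sum fun i _ => (hd i).fun_mul (hd i)]
      simp_rw [fun i => sndDirDeriv_mul (hgC x hx t ht htr i) (hgC x hx t ht htr i) (e k),
        fun i => fderiv_fun_mul (hd i) (hd i)]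
      simp only [sum_apply, add_apply, smul_apply, smul_eq_mul, Finset.mul_sum]
      rw [← Finset.sum_add_distrib, ← Finset.sum_add_distrib, sub_add_eq_add_sub,
        ← Finset.sum_add_distrib]
      congr 1
      exact Finset.sum_congr rfl fun i _ => by ring
    have h1 : ∑ k, ∑ i, 2 * w x * g t i x * sndDirDeriv (e k) (g t i) x = 0 := by
      rw [Finset.sum_comm]
      simp_rw [← Finset.mul_sum, hgΔ x hx t ht htr]
      simp
    rw [Finset.sum_congr rfl fun k _ => h0 k, Finset.sum_add_distrib, Finset.sum_sub_distrib, h1,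
      add_zero]
  have hr0 : 0 < r := by positivity
  set τ : ℕ → ℝ := fun k => r / ((k : ℝ) + 2) with hτ
  have hτ0 : ∀ k, 0 < τ k := fun k => by positivity
  have hτr : ∀ k, τ k < r := fun k => by
    rw [hτ]
    exact div_lt_self hr0 (by have : (0 : ℝ) ≤ k := by positivity
                              linarith)
  have hτlim : Tendsto τ atTop (𝓝 0) :=
    tendsto_const_nhds.div_atTop (tendsto_atTop_add_const_right _ _ tendsto_natCast_atTop_atTop)
  have hcpt : IsCompact (Metric.closedBall x₀ r) := isCompact_closedBall x₀ r
  have hx₀ : x₀ ∈ Metric.closedBall x₀ r := Metric.mem_closedBall_self hr0.le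
  have hex : ∀ k, ∃ x ∈ Metric.closedBall x₀ r, IsMaxOn (Φ (τ k)) (Metric.closedBall x₀ r) x :=
    fun k => hcpt.exists_isMaxOn ⟨x₀, hx₀⟩ fun x hx =>
      (hΦC x hx (τ k) (hτ0 k) (hτr k)).continuousAt.continuousWithinAt
  choose y hy hymax using hex
  obtain ⟨a, ha, φ, hφ, hlim⟩ := hcpt.tendsto_subseq hy
  have hτφ : Tendsto (fun k => τ (φ k)) atTop (𝓝 0) := hτlim.comp hφ.tendsto_atTop
  have hglim : ∀ b ∈ Metric.closedBall x₀ r, ∀ z : ℕ → EuclideanSpace ℝ (Fin n),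
      Tendsto z atTop (𝓝 b) → ∀ i,
      Tendsto (fun k => g (τ (φ k)) i (z k)) atTop (𝓝 (fderiv ℝ u b (e i))) :=
    fun b hb z hz i => ((hball b (hmem b hb)).1.1.of_le (by norm_num)).tendsto_diffQuot
      (fun k => (hτ0 _).ne') hτφ hz (e i)
  have hΦlim : ∀ b ∈ Metric.closedBall x₀ r, ∀ z : ℕ → EuclideanSpace ℝ (Fin n),
      Tendsto z atTop (𝓝 b) → Tendsto (fun k => Φ (τ (φ k)) (z k)) atTop
        (𝓝 (w b * ∑ i, (fderiv ℝ u b (e i)) ^ 2 - P b)) := by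
    intro b hb z hz
    refine (((hwC b hb).continuousAt.tendsto.comp hz).mul (tendsto_finsetSum _ fun i _ => ?_)).sub
      ((hPC.continuous.tendsto b).comp hz)
    rw [pow_two]
    exact (hglim b hb z hz i).mul (hglim b hb z hz i)
  have hax : a = x₀ := by
    have h1 := le_of_tendsto_of_tendsto' (hΦlim x₀ hx₀ _ tendsto_const_nhds) (hΦlim a ha _ hlim)
      fun k => hymax (φ k) hx₀
    have h2 := (hball a (hmem a ha)).2.2
    have h3 : P x₀ = 0 := by simp [hP]
    have h4 : P a ≤ 0 := by linarith
    have h5 : ‖a - x₀‖ = 0 := by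
      by_contra hne
      have : 0 < ‖a - x₀‖ := lt_of_le_of_ne (norm_nonneg _) (Ne.symm hne)
      have : 0 < P a := by positivity
      linarith
    exact sub_eq_zero.1 (norm_eq_zero.1 h5)
  subst hax
  have hle : ∀ᶠ k in atTop, ∑ j, sndDirDeriv (e j) (Φ (τ (φ k))) (y (φ k)) ≤ 0 := by
    filter_upwards [hlim.eventually (Metric.ball_mem_nhds a hr0)] with k hk
    refine Finset.sum_nonpos fun j _ => sndDirDeriv_nonpos_of_isLocalMax
      (hΦC _ (hy _) _ (hτ0 _) (hτr _)) ?_ _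
    exact (hymax (φ k)).isLocalMax
      (mem_of_superset (Metric.isOpen_ball.mem_nhds hk) Metric.ball_subset_closedBall)
  have hdlim : ∀ i k, Tendsto (fun m => fderiv ℝ (g (τ (φ m)) i) (y (φ m)) (e k)) atTop
      (𝓝 (fderiv ℝ (fun y => fderiv ℝ u y (e k)) a (e i))) := fun i k =>
    ((hu.fderiv_apply_const (e k)).tendsto_diffQuot (fun k => (hτ0 _).ne') hτφ hlim (e i)).congr
      fun m => (hgd _ (hy _) _ (hτ0 _) (hτr _) i (e k)).symm
  have hddc : ∀ {F : EuclideanSpace ℝ (Fin n) → ℝ}, ContDiffAt ℝ 2 F a → ∀ k,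
      Tendsto (fun m => sndDirDeriv (e k) F (y (φ m))) atTop (𝓝 (sndDirDeriv (e k) F a)) := by
    intro F hF k
    have h1 : ContinuousAt (sndDirDeriv (e k) F) a :=
      ((hF.fderiv_apply_const (e k)).continuousAt_fderiv (by simp)).clm_apply continuousAt_const
    exact h1.tendsto.comp hlim
  have hfin : Tendsto (fun m => ∑ j, sndDirDeriv (e j) (Φ (τ (φ m))) (y (φ m))) atTop
      (𝓝 (∑ k, ∑ i, (sndDirDeriv (e k) w a * (fderiv ℝ u a (e i)) ^ 2 +
        4 * fderiv ℝ w a (e k) * fderiv ℝ u a (e i) *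
          fderiv ℝ (fun y => fderiv ℝ u y (e k)) a (e i) +
        2 * w a * (fderiv ℝ (fun y => fderiv ℝ u y (e k)) a (e i)) ^ 2) -
          ∑ k, sndDirDeriv (e k) P a)) := by
    refine Tendsto.congr (fun m => (hΦΔ _ (hy _) _ (hτ0 _) (hτr _)).symm) ?_
    refine Tendsto.sub (tendsto_finsetSum _ fun k _ => tendsto_finsetSum _ fun i _ => ?_)
      (tendsto_finsetSum _ fun k _ => hddc hPC.contDiffAt k)
    have hg1 := hglim a ha _ hlim i
    have hw1 : Tendsto (fun m => fderiv ℝ w (y (φ m)) (e k)) atTop (𝓝 (fderiv ℝ w a (e k))) :=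
      (hw.fderiv_apply_const (e k)).continuousAt.tendsto.comp hlim
    have hw0 : Tendsto (fun m => w (y (φ m))) atTop (𝓝 (w a)) := hw.continuousAt.tendsto.comp hlim
    exact (((hddc hw k).mul (hg1.pow 2)).add (((hw1.const_mul 4).mul hg1).mul (hdlim i k))).add
      ((hw0.const_mul 2).mul ((hdlim i k).pow 2))
  have := le_of_tendsto hfin hle
  simpa [hP0] using this

/-- The refined Kato inequality for a trace-free symmetric matrix. -/
lemma card_mul_sum_sq_le_of_trace_zero {ι : Type*} [Fintype ι] (H : ι → ι → ℝ)
    (hsymm : ∀ i j, H i j = H j i) (htr : ∑ i, H i i = 0) (g : ι → ℝ)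
    (hcard : 2 ≤ (Fintype.card ι : ℝ)) :
    (Fintype.card ι : ℝ) * ∑ i, (∑ j, H i j * g j) ^ 2 ≤
      ((Fintype.card ι : ℝ) - 1) * (∑ i, g i ^ 2) * ∑ i, ∑ j, H i j ^ 2 := by
  classical
  set N : ℝ := (Fintype.card ι : ℝ) with hN
  set q : ι → ℝ := fun i => ∑ j, H i j * g j with hq
  set s := ∑ i, g i ^ 2 with hs
  set α := ∑ i, q i * g i with hα
  set Q := ∑ i, q i ^ 2 with hQ
  set T := ∑ i, ∑ j, H i j ^ 2 with hT
  change N * Q ≤ (N - 1) * s * T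
  have hs0 : 0 ≤ s := Finset.sum_nonneg fun i _ => sq_nonneg _
  rcases hs0.eq_or_lt with h0 | hspos
  · have hg : ∀ i, g i = 0 := fun i => by
      have := (Finset.sum_eq_zero_iff_of_nonneg (fun i _ => sq_nonneg (g i))).1 h0.symm i
        (Finset.mem_univ i)
      exact pow_eq_zero_iff (two_ne_zero) |>.1 this
    simp [← h0, hQ, hq, hg]
  have hcs : α ^ 2 ≤ Q * s := Finset.sum_mul_sq_le_sq_mul_sq _ _ _
  have hexp : ∀ a b d : ℝ,
      ∑ i, ∑ j, (H i j - (a * (g i * q j + q i * g j) + b * (g i * g j) +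
        d * if i = j then 1 else 0)) ^ 2 =
      T + a ^ 2 * (2 * s * Q + 2 * α ^ 2) + b ^ 2 * s ^ 2 + d ^ 2 * N - 4 * a * Q - 2 * b * α
        + 4 * a * b * s * α + 4 * a * d * α + 2 * b * d * s := by
    intro a b d
    have hpt : ∀ i j, (H i j - (a * (g i * q j + q i * g j) + b * (g i * g j) +
        d * if i = j then 1 else 0)) ^ 2 =
        H i j ^ 2 + (a ^ 2 * (g i ^ 2 * q j ^ 2) + 2 * a ^ 2 * (q i * g i * (q j * g j)) +
          a ^ 2 * (q i ^ 2 * g j ^ 2) + b ^ 2 * (g i ^ 2 * g j ^ 2) +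
          2 * a * b * (g i ^ 2 * (q j * g j)) + 2 * a * b * (q i * g i * g j ^ 2)) -
        2 * a * (q i * (H i j * g j)) - 2 * a * (q j * (H j i * g i)) -
        2 * b * (g i * (H i j * g j)) +
        (if i = j then d ^ 2 - 2 * d * H i j + 2 * a * d * (g i * q j + q i * g j) +
          2 * b * d * (g i * g j) else 0) := by
      intro i j
      rw [hsymm j i]
      split_ifs <;> ring
    have hHg : ∀ p : ι → ℝ, ∑ i, ∑ j, p i * (H i j * g j) = ∑ i, p i * q i := fun p => by
      simp_rw [← Finset.mul_sum, hq]
    have hHg' : ∀ p : ι → ℝ, ∑ i, ∑ j, p j * (H j i * g i) = ∑ i, p i * q i := fun p => by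
      rw [Finset.sum_comm, hHg]
    have hqq : ∑ i, q i * q i = Q := by simp_rw [hQ, pow_two]
    have hgq : ∑ i, g i * q i = α := by simp_rw [hα, mul_comm]
    have hgg : ∑ i, g i * g i = s := by simp_rw [hs, pow_two]
    have hdiag : ∑ i, (d ^ 2 - 2 * d * H i i + 2 * a * d * (g i * q i + q i * g i) +
          2 * b * d * (g i * g i)) = d ^ 2 * N + 4 * a * d * α + 2 * b * d * s := by
      simp_rw [Finset.sum_add_distrib, Finset.sum_sub_distrib, ← Finset.mul_sum,
        Finset.sum_add_distrib, htr, hgq, ← hα, hgg]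
      simp only [Finset.sum_const, Finset.card_univ, nsmul_eq_mul, ← hN]
      ring
    simp_rw [hpt, Finset.sum_add_distrib, Finset.sum_sub_distrib, Finset.sum_add_distrib,
      ← Finset.mul_sum (a := 2 * a), ← Finset.mul_sum (a := 2 * b), hHg, hHg', hqq, hgq]
    simp only [Finset.sum_ite_eq, Finset.mem_univ, if_true, hdiag]
    simp_rw [← Finset.mul_sum, ← Finset.sum_mul, ← hα, ← hs, ← hQ, ← hT]
    ring
  have hnn := fun a b d : ℝ => (hexp a b d).le.trans' <|
    Finset.sum_nonneg fun i _ => Finset.sum_nonneg fun j _ => sq_nonneg (H i j -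
      (a * (g i * q j + q i * g j) + b * (g i * g j) + d * if i = j then 1 else 0))
  have hN1 : 0 < N - 1 := by linarith
  have key := hnn (1 / s) (-(α * (N - 2) / (s ^ 2 * (N - 1)))) (-(α / ((N - 1) * s)))
  have e1 : T + (1 / s) ^ 2 * (2 * s * Q + 2 * α ^ 2) +
      (-(α * (N - 2) / (s ^ 2 * (N - 1)))) ^ 2 * s ^ 2 + (-(α / ((N - 1) * s))) ^ 2 * N -
      4 * (1 / s) * Q - 2 * (-(α * (N - 2) / (s ^ 2 * (N - 1)))) * α
        + 4 * (1 / s) * (-(α * (N - 2) / (s ^ 2 * (N - 1)))) * s * α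
        + 4 * (1 / s) * (-(α / ((N - 1) * s))) * α
        + 2 * (-(α * (N - 2) / (s ^ 2 * (N - 1)))) * (-(α / ((N - 1) * s))) * s =
      T - 2 * Q / s + (N - 2) / (N - 1) * α ^ 2 / s ^ 2 := by
    field_simp
    ring
  rw [e1] at key
  have h2 : (N - 2) / (N - 1) * α ^ 2 / s ^ 2 ≤ (N - 2) / (N - 1) * Q / s := by
    rw [mul_div_assoc, mul_div_assoc]
    refine mul_le_mul_of_nonneg_left ?_ (div_nonneg (by linarith) hN1.le)
    rw [div_le_div_iff₀ (by positivity) hspos]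
    nlinarith
  have h3 : 0 ≤ T - N / (N - 1) * Q / s := by
    have : T - N / (N - 1) * Q / s = T - 2 * Q / s + (N - 2) / (N - 1) * Q / s := by
      field_simp
      ring
    linarith
  have h4 : 0 ≤ (N - 1) * s * (T - N / (N - 1) * Q / s) := by positivity
  have h5 : (N - 1) * s * (T - N / (N - 1) * Q / s) = (N - 1) * s * T - N * Q := by
    field_simp
  linarith

lemma ContDiffAt.fderiv_fderiv_apply_comm {E : Type*} [NormedAddCommGroup E] [NormedSpace ℝ E]
    {u : E → ℝ} {x : E} (hu : ContDiffAt ℝ 2 u x) (a b : E) :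
    fderiv ℝ (fun y => fderiv ℝ u y a) x b = fderiv ℝ (fun y => fderiv ℝ u y b) x a := by
  have hd : DifferentiableAt ℝ (fderiv ℝ u) x :=
    (hu.fderiv_right (m := 1) (by norm_num)).differentiableAt (by simp)
  have h := fun a b : E => show fderiv ℝ (fun y => fderiv ℝ u y a) x b =
      fderiv ℝ (fderiv ℝ u) x b a by
    rw [fderiv_clm_apply hd (differentiableAt_const a)]
    simp
  rw [h, h]
  exact (hu.isSymmSndFDerivAt (by simp)).eq b a

/-- A positive weight `w` for which `w |∇u|²` has a nonzero local maximum satisfies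
`2 (n - 1) w Δw ≤ (3 n - 4) |∇w|²` there. -/
lemma weight_laplacian_le_of_isLocalMax {n : ℕ} (hn : 2 ≤ n) {u w : EuclideanSpace ℝ (Fin n) → ℝ}
    {x₀ : EuclideanSpace ℝ (Fin n)} (hu : ContDiffAt ℝ 2 u x₀)
    (hΔ : ∀ᶠ x in 𝓝 x₀, ∑ k, sndDirDeriv (EuclideanSpace.single k (1 : ℝ)) u x = 0)
    (hw : ContDiffAt ℝ 2 w x₀) (hw0 : 0 < w x₀)
    (hv0 : 0 < ∑ i, (fderiv ℝ u x₀ (EuclideanSpace.single i 1)) ^ 2)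
    (hmax : IsLocalMax
      (fun x => w x * ∑ i, (fderiv ℝ u x (EuclideanSpace.single i 1)) ^ 2) x₀) :
    2 * ((n : ℝ) - 1) * (w x₀ * ∑ k, sndDirDeriv (EuclideanSpace.single k (1 : ℝ)) w x₀) ≤
      (3 * n - 4) * ∑ k, (fderiv ℝ w x₀ (EuclideanSpace.single k 1)) ^ 2 := by
  have hB := bochner_nonpos_of_isLocalMax hu hΔ hw hmax
  set e : Fin n → EuclideanSpace ℝ (Fin n) := fun i => EuclideanSpace.single i 1 with he
  set v := ∑ i, (fderiv ℝ u x₀ (e i)) ^ 2 with hv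
  set H : Fin n → Fin n → ℝ := fun k i => fderiv ℝ (fun y => fderiv ℝ u y (e k)) x₀ (e i) with hH
  set g : Fin n → ℝ := fun i => fderiv ℝ u x₀ (e i) with hg
  set q : Fin n → ℝ := fun k => ∑ i, H k i * g i with hq
  set W : Fin n → ℝ := fun k => fderiv ℝ w x₀ (e k) with hW
  set D : ℝ := ∑ k, sndDirDeriv (e k) w x₀ with hD
  set T := ∑ k, ∑ i, H k i ^ 2 with hT
  have hsymm : ∀ i j, H i j = H j i := fun i j => hu.fderiv_fderiv_apply_comm _ _
  have hfirst : ∀ k, W k * v + 2 * w x₀ * q k = 0 := by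
    intro k
    have hd : HasFDerivAt (fun x => w x * ∑ i, (fderiv ℝ u x (e i)) ^ 2) _ x₀ :=
      (hw.differentiableAt (by simp)).hasFDerivAt.fun_mul (HasFDerivAt.fun_sum fun i _ =>
        (hu.differentiableAt_fderiv_apply (e i)).hasFDerivAt.pow 2)
    have h1 := congrArg (fun L : EuclideanSpace ℝ (Fin n) →L[ℝ] ℝ => L (e k))
      (hmax.hasFDerivAt_eq_zero hd)
    simp only [add_apply, smul_apply, sum_apply, smul_eq_mul, zero_apply] at h1
    have h2 : ∑ i, (2 • fderiv ℝ u x₀ (e i) ^ (2 - 1)) * H i k = 2 * q k := by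
      rw [hq, Finset.mul_sum]
      refine Finset.sum_congr rfl fun i _ => ?_
      rw [hsymm k i]
      simp [hg]
      ring
    rw [h2] at h1
    linarith
  have hB' : D * v + 4 * ∑ k, W k * q k + 2 * w x₀ * T ≤ 0 := by
    refine le_trans (le_of_eq ?_) hB
    have h1 : D * v = ∑ k, ∑ i, sndDirDeriv (e k) w x₀ * (g i) ^ 2 := by
      rw [hD, hv, Finset.sum_mul_sum]
    simp_rw [h1, hq, hT, Finset.mul_sum, ← Finset.sum_add_distrib]
    exact Finset.sum_congr rfl fun k _ => Finset.sum_congr rfl fun i _ => by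
      simp only [hH, hW, hg, he]; ring
  have hK := card_mul_sum_sq_le_of_trace_zero H hsymm hΔ.self_of_nhds g
    (by simpa using (by exact_mod_cast hn : (2 : ℝ) ≤ n))
  simp only [Fintype.card_fin] at hK
  change (n : ℝ) * ∑ i, (q i) ^ 2 ≤ ((n : ℝ) - 1) * v * T at hK
  set S := ∑ k, W k ^ 2 with hS
  have hqW : ∀ k, q k = -(v / (2 * w x₀)) * W k := fun k => by
    have := hfirst k
    field_simp
    linarith
  have h1 : ∑ k, W k * q k = -(v / (2 * w x₀)) * S := by
    rw [hS, Finset.mul_sum]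
    exact Finset.sum_congr rfl fun k _ => by rw [hqW]; ring
  have h2 : ∑ k, q k ^ 2 = (v / (2 * w x₀)) ^ 2 * S := by
    rw [hS, Finset.mul_sum]
    exact Finset.sum_congr rfl fun k _ => by rw [hqW]; ring
  rw [h1] at hB'
  rw [h2] at hK
  have hn1 : (0 : ℝ) < (n : ℝ) - 1 := by
    have : (2 : ℝ) ≤ n := by exact_mod_cast hn
    linarith
  have hK' : n * v * S ≤ 4 * w x₀ ^ 2 * ((n - 1) * T) := by
    have : n * v * S = 4 * w x₀ ^ 2 / v * (n * ((v / (2 * w x₀)) ^ 2 * S)) := by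
      field_simp
      ring
    rw [this]
    refine (mul_le_mul_of_nonneg_left hK (by positivity)).trans (le_of_eq ?_)
    field_simp
  have hB'' : w x₀ * D * v - 2 * v * S + 2 * w x₀ ^ 2 * T ≤ 0 := by
    have : w x₀ * D * v - 2 * v * S + 2 * w x₀ ^ 2 * T =
        w x₀ * (D * v + 4 * (-(v / (2 * w x₀)) * S) + 2 * w x₀ * T) := by
      field_simp
      ring
    rw [this]
    exact mul_nonpos_of_nonneg_of_nonpos hw0.le hB'
  have h3 := mul_le_mul_of_nonneg_left hB'' hn1.le
  have h4 : v * (2 * (n - 1) * (w x₀ * D)) ≤ v * ((3 * n - 4) * S) := by nlinarith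
  exact le_of_mul_le_mul_left h4 hv0

lemma fderiv_rpow_apply {E : Type*} [NormedAddCommGroup E] [NormedSpace ℝ E] {f : E → ℝ} {x : E}
    (hf : DifferentiableAt ℝ f x) (hf0 : 0 < f x) (β : ℝ) (e : E) :
    fderiv ℝ (fun y => f y ^ β) x e = β * f x ^ (β - 1) * fderiv ℝ f x e := by
  rw [(hf.hasFDerivAt.rpow_const (p := β) (Or.inl hf0.ne')).fderiv]
  simp

lemma sndDirDeriv_rpow {E : Type*} [NormedAddCommGroup E] [NormedSpace ℝ E] {f : E → ℝ} {x : E}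
    (hf : ContDiffAt ℝ 2 f x) (hf0 : 0 < f x) (β : ℝ) (e : E) :
    sndDirDeriv e (fun y => f y ^ β) x = β * (β - 1) * f x ^ (β - 2) * (fderiv ℝ f x e) ^ 2 +
      β * f x ^ (β - 1) * sndDirDeriv e f x := by
  have h1 : (fun y => fderiv ℝ (fun y => f y ^ β) y e) =ᶠ[𝓝 x]
      fun y => β * (f y ^ (β - 1) * fderiv ℝ f y e) := by
    filter_upwards [hf.eventually_differentiableAt_of_two,
      hf.continuousAt.eventually (lt_mem_nhds hf0)] with y hy1 hy2
    rw [fderiv_rpow_apply hy1 hy2]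
    ring
  have d0 := hf.differentiableAt (by simp)
  have d1 := hf.differentiableAt_fderiv_apply e
  have d2 : DifferentiableAt ℝ (fun y => f y ^ (β - 1)) x := d0.rpow_const (Or.inl hf0.ne')
  rw [sndDirDeriv, h1.fderiv_eq, fderiv_const_mul (d2.fun_mul d1), fderiv_fun_mul d2 d1]
  simp only [add_apply, smul_apply, smul_eq_mul, fderiv_rpow_apply d0 hf0, sndDirDeriv]
  rw [show β - 1 - 1 = β - 2 by ring]
  ring

/-- At a nonzero local maximum of `f ^ β |∇u|²` one has
`2 (n - 1) f Δf ≤ (2 (n - 1) + β (n - 2)) |∇f|²`. -/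
lemma laplacian_le_of_isLocalMax_rpow {n : ℕ} (hn : 2 ≤ n) {u f : EuclideanSpace ℝ (Fin n) → ℝ}
    {x₀ : EuclideanSpace ℝ (Fin n)} {β : ℝ} (hβ : 0 < β) (hu : ContDiffAt ℝ 2 u x₀)
    (hΔ : ∀ᶠ x in 𝓝 x₀, ∑ k, sndDirDeriv (EuclideanSpace.single k (1 : ℝ)) u x = 0)
    (hf : ContDiffAt ℝ 2 f x₀) (hf0 : 0 < f x₀)
    (hv0 : 0 < ∑ i, (fderiv ℝ u x₀ (EuclideanSpace.single i 1)) ^ 2)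
    (hmax : IsLocalMax
      (fun x => f x ^ β * ∑ i, (fderiv ℝ u x (EuclideanSpace.single i 1)) ^ 2) x₀) :
    2 * ((n : ℝ) - 1) * (f x₀ * ∑ k, sndDirDeriv (EuclideanSpace.single k (1 : ℝ)) f x₀) ≤
      (2 * ((n : ℝ) - 1) + β * (n - 2)) *
        ∑ k, (fderiv ℝ f x₀ (EuclideanSpace.single k 1)) ^ 2 := by
  have h := weight_laplacian_le_of_isLocalMax (w := fun y => f y ^ β) hn hu hΔ
    (hf.rpow_const_of_ne hf0.ne') (Real.rpow_pos_of_pos hf0 β) hv0 hmax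
  simp only [sndDirDeriv_rpow hf hf0, fderiv_rpow_apply (hf.differentiableAt (by simp)) hf0] at h
  set z := f x₀ ^ (β - 2) with hz
  have hz0 : 0 < z := Real.rpow_pos_of_pos hf0 _
  have h1 : f x₀ ^ (β - 1) = f x₀ * z := by
    rw [hz, show β - 1 = 1 + (β - 2) by ring, Real.rpow_add hf0, Real.rpow_one]
  have h2 : f x₀ ^ β = f x₀ ^ 2 * z := by
    rw [hz, show β = 2 + (β - 2) by ring, Real.rpow_add hf0, Real.rpow_two]
    ring_nf
  rw [h1, h2] at h
  simp only [mul_pow, Finset.sum_add_distrib, ← Finset.mul_sum] at h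
  set S := ∑ k, (fderiv ℝ f x₀ (EuclideanSpace.single k 1)) ^ 2
  set D := ∑ k, sndDirDeriv (EuclideanSpace.single k (1 : ℝ)) f x₀
  have hm : 0 < β * f x₀ ^ 2 * z ^ 2 := by positivity
  refine le_of_mul_le_mul_left ?_ hm
  nlinarith

section Neumann

variable {E : Type*} [NormedAddCommGroup E] [InnerProductSpace ℝ E] [CompleteSpace E]
  {u : E → ℝ} {x p : E}

lemma ContDiffAt.differentiableAt_gradient (hu : ContDiffAt ℝ 2 u x) :
    DifferentiableAt ℝ (gradient u) x := by
  have hd : DifferentiableAt ℝ (fderiv ℝ u) x :=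
    (hu.fderiv_right (m := 1) (by norm_num)).differentiableAt (by simp)
  exact (InnerProductSpace.toDual ℝ E).symm.toContinuousLinearEquiv.differentiableAt.comp x hd

lemma ContDiffAt.inner_fderiv_gradient (hu : ContDiffAt ℝ 2 u x) (a b : E) :
    ⟪fderiv ℝ (gradient u) x a, b⟫ = fderiv ℝ (fun y => fderiv ℝ u y b) x a := by
  have h := fderiv_inner_apply ℝ hu.differentiableAt_gradient (differentiableAt_const b) a
  simp only [inner_gradient_left] at h
  simpa using h.symm

/-- If `u` satisfies a homogeneous Neumann condition on the unit sphere around `p`, then the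
radial derivative of `|∇u|²` on this sphere is `-2 |∇u|²`. -/
lemma inner_gradient_fderiv_gradient_of_neumann (hu : ContDiffAt ℝ 2 u x) (hx : ‖x - p‖ = 1)
    (hN : ∀ᶠ y in 𝓝 x, ‖y - p‖ = 1 → ⟪gradient u y, y - p⟫ = 0) :
    ⟪gradient u x, fderiv ℝ (gradient u) x (x - p)⟫ = -‖gradient u x‖ ^ 2 := by
  set g := gradient u x with hg
  rcases eq_or_ne g 0 with h0 | h0
  · simp [h0]
  have hgν : ⟪g, x - p⟫ = 0 := hN.self_of_nhds hx
  set a := ‖g‖ with ha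
  have ha0 : a ≠ 0 := norm_ne_zero_iff.2 h0
  set b := a⁻¹ • g with hb
  have hb1 : ‖b‖ = 1 := by rw [hb, norm_smul, norm_inv, norm_norm]; exact inv_mul_cancel₀ ha0
  have hνb : ⟪x - p, b⟫ = 0 := by
    rw [hb, inner_smul_right, real_inner_comm, hgν, mul_zero]
  set c : ℝ → E := fun s => p + (Real.cos s • (x - p) + Real.sin s • b) with hc
  have hc0 : c 0 = x := by simp [hc]
  have hcd : HasDerivAt c b 0 := by
    have h1 := ((Real.hasDerivAt_cos 0).smul_const (x - p)).add
      ((Real.hasDerivAt_sin 0).smul_const b)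
    simpa [hc] using h1.const_add p
  have hcn : ∀ s, ‖c s - p‖ = 1 := by
    intro s
    have h1 : ‖c s - p‖ ^ 2 = 1 := by
      rw [hc]
      simp only [add_sub_cancel_left]
      rw [norm_add_sq_real, norm_smul, norm_smul, inner_smul_left, inner_smul_right, hνb, hx, hb1]
      simp
    have := norm_nonneg (c s - p)
    nlinarith
  have hzero : (fun s => ⟪gradient u (c s), c s - p⟫) =ᶠ[𝓝 0] fun _ => 0 := by
    have : Tendsto c (𝓝 0) (𝓝 x) := by simpa [hc0] using hcd.continuousAt.tendsto
    filter_upwards [this.eventually hN] with s hs using hs (hcn s)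
  have hGd : HasDerivAt (fun s => gradient u (c s)) (fderiv ℝ (gradient u) x b) 0 := by
    have h1 := hu.differentiableAt_gradient.hasFDerivAt
    rw [← hc0] at h1
    have h2 := h1.comp_hasDerivAt (0 : ℝ) hcd
    rw [hc0] at h2
    exact h2
  have hd := (hGd.inner ℝ (hcd.sub_const p)).unique
    ((hasDerivAt_const (0 : ℝ) (0 : ℝ)).congr_of_eventuallyEq hzero)
  rw [hc0, ← hg, hu.inner_fderiv_gradient, hu.fderiv_fderiv_apply_comm,
    ← hu.inner_fderiv_gradient] at hd
  have hgb : g = a • b := by rw [hb, smul_smul, mul_inv_cancel₀ ha0, one_smul]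
  have hgbi : ⟪g, b⟫ = a := by
    rw [hgb, inner_smul_left, real_inner_self_eq_norm_sq, hb1]; simp
  rw [hgbi] at hd
  have : ⟪fderiv ℝ (gradient u) x (x - p), b⟫ = -a := by linarith
  rw [real_inner_comm]
  nth_rw 1 [hgb]
  rw [inner_smul_right, this]
  ring

/-- At a nonzero boundary maximum of `f ^ β |∇u|²` the radial derivative of `f` is at most
`2 f / β`. -/
lemma radial_fderiv_le_of_boundary_max {f : E → ℝ} {β : ℝ} (hu : ContDiffAt ℝ 2 u x)
    (hf : DifferentiableAt ℝ f x) (hf0 : 0 < f x) (hg : gradient u x ≠ 0) (hx : ‖x - p‖ = 1)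
    (hN : ∀ᶠ y in 𝓝 x, ‖y - p‖ = 1 → ⟪gradient u y, y - p⟫ = 0)
    (hmax : ∀ᶠ t in 𝓝[>] (0 : ℝ), f (x + t • (x - p)) ^ β * ‖gradient u (x + t • (x - p))‖ ^ 2 ≤
      f x ^ β * ‖gradient u x‖ ^ 2) :
    β * fderiv ℝ f x (x - p) ≤ 2 * f x := by
  set l : ℝ → E := fun t => x + t • (x - p) with hl
  have hl0 : l 0 = x := by simp [hl]
  have hld : HasDerivAt l (x - p) 0 := by
    simpa [hl] using ((hasDerivAt_id (0 : ℝ)).smul_const (x - p)).const_add x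
  have hw : HasDerivAt (fun t => f (l t) ^ β) (β * f x ^ (β - 1) * fderiv ℝ f x (x - p)) 0 := by
    have h1 := hf.hasFDerivAt.rpow_const (p := β) (Or.inl hf0.ne')
    rw [← hl0] at h1
    have h2 := h1.comp_hasDerivAt (0 : ℝ) hld
    rw [hl0] at h2
    exact h2
  have hG : HasDerivAt (fun t => gradient u (l t)) (fderiv ℝ (gradient u) x (x - p)) 0 := by
    have h1 := hu.differentiableAt_gradient.hasFDerivAt
    rw [← hl0] at h1
    have h2 := h1.comp_hasDerivAt (0 : ℝ) hld
    rw [hl0] at h2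
    exact h2
  have hd := hw.fun_mul hG.norm_sq
  rw [hl0, inner_gradient_fderiv_gradient_of_neumann hu hx hN] at hd
  have hle := le_of_tendsto hd.tendsto_slope_zero_right (b := 0) (by
    filter_upwards [hmax, self_mem_nhdsWithin] with t ht ht0
    rw [zero_add, hl0, smul_eq_mul]
    exact mul_nonpos_of_nonneg_of_nonpos (inv_nonneg.2 (le_of_lt ht0)) (sub_nonpos.2 ht))
  have hv : 0 < ‖gradient u x‖ ^ 2 := by positivity
  have hz : 0 < f x ^ (β - 1) := Real.rpow_pos_of_pos hf0 _
  have hβ : f x ^ β = f x * f x ^ (β - 1) := by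
    rw [mul_comm, ← Real.rpow_add_one hf0.ne', sub_add_cancel]
  rw [hβ] at hle
  have hm : 0 < f x ^ (β - 1) * ‖gradient u x‖ ^ 2 := by positivity
  refine le_of_mul_le_mul_left ?_ hm
  linarith

end Neumann

/-- The quadratic barrier `δ + |x'|² - A x_m²`, where `x'` omits the coordinate `m`. -/
noncomputable def barrier {n : ℕ} (m : Fin n) (δ A : ℝ) (x : EuclideanSpace ℝ (Fin n)) : ℝ :=
  δ + ‖x‖ ^ 2 - (1 + A) * x m ^ 2

section Barrier

variable {n : ℕ} (m : Fin n) (δ A : ℝ)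

lemma contDiff_barrier : ContDiff ℝ 2 (barrier m δ A) := by
  unfold barrier
  have h1 : ContDiff ℝ 2 (fun x : EuclideanSpace ℝ (Fin n) => ‖x‖ ^ 2) := contDiff_norm_sq ℝ
  have h2 : ContDiff ℝ 2 (fun x : EuclideanSpace ℝ (Fin n) => x m) := by fun_prop
  exact (contDiff_const.add h1).sub (contDiff_const.mul (h2.pow 2))

lemma fderiv_barrier_apply (x v : EuclideanSpace ℝ (Fin n)) :
    fderiv ℝ (barrier m δ A) x v = 2 * ⟪x, v⟫ - 2 * (1 + A) * x m * v m := by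
  have h1 : HasFDerivAt (fun x : EuclideanSpace ℝ (Fin n) => ‖x‖ ^ 2) (2 • innerSL ℝ x) x :=
    (hasStrictFDerivAt_norm_sq x).hasFDerivAt
  have h2 : HasFDerivAt (fun x : EuclideanSpace ℝ (Fin n) => x m)
      (EuclideanSpace.proj (𝕜 := ℝ) m) x :=
    (EuclideanSpace.proj (𝕜 := ℝ) m : EuclideanSpace ℝ (Fin n) →L[ℝ] ℝ).hasFDerivAt
  have h3 : HasFDerivAt (barrier m δ A) _ x :=
    (h1.const_add δ).fun_sub ((h2.pow 2).const_mul (1 + A))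
  rw [h3.fderiv]
  simp
  ring

lemma sndDirDeriv_barrier (x v : EuclideanSpace ℝ (Fin n)) :
    sndDirDeriv v (barrier m δ A) x = 2 * ‖v‖ ^ 2 - 2 * (1 + A) * v m ^ 2 := by
  simp only [sndDirDeriv, fderiv_barrier_apply]
  have h2 : HasFDerivAt (fun x : EuclideanSpace ℝ (Fin n) => x m)
      (EuclideanSpace.proj (𝕜 := ℝ) m) x :=
    (EuclideanSpace.proj (𝕜 := ℝ) m : EuclideanSpace ℝ (Fin n) →L[ℝ] ℝ).hasFDerivAt
  have h1 : HasFDerivAt (fun x : EuclideanSpace ℝ (Fin n) => ⟪v, x⟫) (innerSL ℝ v) x :=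
    (innerSL ℝ v).hasFDerivAt
  have h3 := (h1.const_mul 2).fun_sub ((h2.const_mul (2 * (1 + A))).mul_const (v m))
  simp_rw [real_inner_comm]
  rw [h3.fderiv]
  simp
  ring

lemma sum_sndDirDeriv_barrier (x : EuclideanSpace ℝ (Fin n)) :
    ∑ k, sndDirDeriv (EuclideanSpace.single k (1 : ℝ)) (barrier m δ A) x =
      2 * ((n : ℝ) - 1 - A) := by
  simp only [sndDirDeriv_barrier, Finset.sum_sub_distrib]
  simp
  ring

lemma sum_sq_fderiv_barrier (x : EuclideanSpace ℝ (Fin n)) :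
    ∑ k, (fderiv ℝ (barrier m δ A) x (EuclideanSpace.single k 1)) ^ 2 =
      4 * (‖x‖ ^ 2 - x m ^ 2) + 4 * A ^ 2 * x m ^ 2 := by
  have h : ∀ k, (fderiv ℝ (barrier m δ A) x (EuclideanSpace.single k 1)) ^ 2 =
      4 * x k ^ 2 + if m = k then 4 * (A ^ 2 - 1) * x k ^ 2 else 0 := fun k => by
    rw [fderiv_barrier_apply]
    by_cases hk : m = k
    · subst hk
      simp [EuclideanSpace.inner_single_right]
      ring
    · simp [EuclideanSpace.inner_single_right, hk]
      ring
  simp_rw [h, Finset.sum_add_distrib, ← Finset.mul_sum]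
  rw [EuclideanSpace.norm_sq_eq]
  simp
  ring

end Barrier

lemma gradient_norm_sq_eq_sum {n : ℕ} (u : EuclideanSpace ℝ (Fin n) → ℝ)
    (x : EuclideanSpace ℝ (Fin n)) :
    ‖gradient u x‖ ^ 2 = ∑ i, (fderiv ℝ u x (EuclideanSpace.single i 1)) ^ 2 := by
  rw [EuclideanSpace.norm_sq_eq]
  refine Finset.sum_congr rfl fun i _ => ?_
  rw [← inner_gradient_left, EuclideanSpace.inner_single_right]
  simp

lemma norm_sub_smul_single_sq {n : ℕ} (m : Fin n) (s : ℝ) (x : EuclideanSpace ℝ (Fin n)) :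
    ‖x - s • EuclideanSpace.single m (1 : ℝ)‖ ^ 2 = ‖x‖ ^ 2 - 2 * s * x m + s ^ 2 := by
  rw [norm_sub_sq_real, inner_smul_right, EuclideanSpace.inner_single_right, norm_smul]
  simp
  ring

lemma sum_erase_sq_eq {n : ℕ} (m : Fin n) (x : EuclideanSpace ℝ (Fin n)) :
    ∑ i ∈ Finset.univ.erase m, (x i) ^ 2 = ‖x‖ ^ 2 - x m ^ 2 := by
  rw [EuclideanSpace.norm_sq_eq, ← Finset.add_sum_erase _ _ (Finset.mem_univ m)]
  simp

/-- In the neck between the two unit balls the vertical coordinate is quadratically small. -/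
lemma sq_coord_le_of_mem_neck {n : ℕ} (m : Fin n) {c ε : ℝ} (hc : c < 1 / 2) (hε : 0 < ε)
    (hε1 : ε < 1) {x : EuclideanSpace ℝ (Fin n)} (hx : ‖x‖ ≤ c)
    (h1 : 1 ≤ ‖x - (1 + ε) • EuclideanSpace.single m (1 : ℝ)‖)
    (h2 : 1 ≤ ‖x + (1 + ε) • EuclideanSpace.single m (1 : ℝ)‖) :
    x m ^ 2 ≤ 2 * c * (ε + (‖x‖ ^ 2 - x m ^ 2)) := by
  have h1' : 1 ≤ ‖x‖ ^ 2 - 2 * (1 + ε) * x m + (1 + ε) ^ 2 := by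
    rw [← norm_sub_smul_single_sq]; nlinarith
  have h2' : 1 ≤ ‖x‖ ^ 2 + 2 * (1 + ε) * x m + (1 + ε) ^ 2 := by
    have := norm_sub_smul_single_sq m (-(1 + ε)) x
    rw [neg_smul, sub_neg_eq_add] at this
    nlinarith
  have hm : |x m| ≤ ‖x‖ := by simpa using PiLp.norm_apply_le x m
  have hsq : |x m| ^ 2 = x m ^ 2 := sq_abs _
  have hR : 0 ≤ ‖x‖ ^ 2 - x m ^ 2 := by
    rw [← hsq]
    have := abs_nonneg (x m)
    nlinarith
  set R := ‖x‖ ^ 2 - x m ^ 2 with hRdef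
  have h3 : 2 * (1 + ε) * |x m| ≤ R + |x m| ^ 2 + 2 * ε + ε ^ 2 := by
    rw [hsq]
    rcases abs_cases (x m) with ⟨h, _⟩ | ⟨h, _⟩ <;> rw [h] <;> linarith
  have ha := abs_nonneg (x m)
  have h4 : |x m| ≤ 2 * (ε + R) := by nlinarith
  rw [← hsq]
  nlinarith

lemma gammaStar_quadratic_neg {n : ℕ} (hn : 4 ≤ n) {γ : ℝ} (hγ0 : 0 < γ) (hγ : γ < gammaStar n) :
    ((n : ℝ) - 2) * γ ^ 2 + ((n : ℝ) ^ 2 - 4 * n + 5) * γ - ((n : ℝ) ^ 2 - 5 * n + 5) < 0 := by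
  have hn' : (4 : ℝ) ≤ n := by exact_mod_cast hn
  have ha : 0 < (n : ℝ) - 2 := by linarith
  have hb : 0 < (n : ℝ) ^ 2 - 4 * n + 5 := by nlinarith
  rw [gammaStar, lt_div_iff₀ (by linarith)] at hγ
  set b := (n : ℝ) ^ 2 - 4 * n + 5
  have h1 : γ * (2 * ((n : ℝ) - 2)) + b <
      √(b ^ 2 + 4 * ((n : ℝ) - 2) * ((n : ℝ) ^ 2 - 5 * n + 5)) := by linarith
  rw [Real.lt_sqrt (by positivity)] at h1
  have h2 : 4 * ((n : ℝ) - 2) *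
      (((n : ℝ) - 2) * γ ^ 2 + b * γ - ((n : ℝ) ^ 2 - 5 * n + 5)) < 0 := by
    nlinarith
  exact (pos_iff_neg_of_mul_neg h2).1 (by linarith)

lemma lt_one_of_lt_gammaStar {n : ℕ} (hn : 4 ≤ n) {γ : ℝ} (hγ0 : 0 < γ) (hγ : γ < gammaStar n) :
    γ < 1 := by
  have h := gammaStar_quadratic_neg hn hγ0 hγ
  have hn' : (4 : ℝ) ≤ n := by exact_mod_cast hn
  by_contra! h1
  have hb : 0 < (n : ℝ) ^ 2 - 4 * n + 5 := by nlinarith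
  nlinarith [mul_le_mul_of_nonneg_left h1 hb.le, one_le_pow₀ h1 (n := 2)]

/-- Admissible barrier coefficients exist exactly because `γ < γ*(n)`. -/
lemma exists_barrier_coefficient {n : ℕ} (hn : 4 ≤ n) {γ : ℝ} (hγ0 : 0 < γ)
    (hγ : γ < gammaStar n) :
    ∃ A : ℝ, 0 < A ∧ 2 < (1 - γ) * (2 + A) ∧
      2 + (1 - γ) * ((n : ℝ) - 2) / ((n : ℝ) - 1) < (n : ℝ) - 1 - A := by
  have h := gammaStar_quadratic_neg hn hγ0 hγ
  have hβ : 0 < 1 - γ := by linarith [lt_one_of_lt_gammaStar hn hγ0 hγ]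
  have hn1 : (0 : ℝ) < (n : ℝ) - 1 := by
    have : (4 : ℝ) ≤ n := by exact_mod_cast hn
    linarith
  have hlt : 2 / (1 - γ) - 2 < (n : ℝ) - 1 - 2 - (1 - γ) * ((n : ℝ) - 2) / ((n : ℝ) - 1) := by
    have : (n : ℝ) - 1 - 2 - (1 - γ) * ((n : ℝ) - 2) / ((n : ℝ) - 1) - (2 / (1 - γ) - 2) =
        -(((n : ℝ) - 2) * γ ^ 2 + ((n : ℝ) ^ 2 - 4 * n + 5) * γ - ((n : ℝ) ^ 2 - 5 * n + 5)) /
          ((1 - γ) * ((n : ℝ) - 1)) := by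
      field_simp
      ring
    have h2 := div_pos (neg_pos.2 h) (mul_pos hβ hn1)
    linarith
  obtain ⟨A, hA1, hA2⟩ := exists_between hlt
  refine ⟨A, lt_trans ?_ hA1, ?_, by linarith⟩
  · rw [sub_pos, lt_div_iff₀ hβ]; linarith
  · have : 2 / (1 - γ) < 2 + A := by linarith
    rw [div_lt_iff₀ hβ] at this
    linarith

/-- For a small enough radius the perturbation `x_n²` does not affect the barrier inequalities. -/
lemma exists_neck_radius {A κ K M : ℝ} (hA : 0 < A) (hκ : 0 < κ) (hK : 0 < K) (hM : K < M) :
    ∃ c μ : ℝ, 0 < c ∧ c < 1 / 2 ∧ 0 < μ ∧ ∀ ε R z : ℝ, 0 < ε → 0 ≤ R → 0 ≤ z →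
      z ≤ 2 * c * (ε + R) →
      μ * (ε + R) ≤ κ * ε + R - A * z ∧ K * (R + A ^ 2 * z) < (κ * ε + R - A * z) * M := by
  have hM0 : 0 < M := hK.trans hM
  set a := min κ 1 with ha
  set b := min (M - K) (M * κ) with hb
  have ha0 : 0 < a := lt_min hκ one_pos
  have hb0 : 0 < b := lt_min (by linarith) (by positivity)
  set L := M * A + K * A ^ 2 with hL
  have hL0 : 0 < L := by positivity
  set c := min (1 / 4) (min (a / (4 * A)) (b / (4 * L))) with hc
  have hc0 : 0 < c := by positivity
  have hc1 : c * (4 * A) ≤ a :=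
    (le_div_iff₀ (by positivity)).1 ((min_le_right _ _).trans (min_le_left _ _))
  have hc2 : c * (4 * L) ≤ b :=
    (le_div_iff₀ (by positivity)).1 ((min_le_right _ _).trans (min_le_right _ _))
  refine ⟨c, a / 2, hc0, lt_of_le_of_lt (min_le_left _ _) (by norm_num), by positivity, ?_⟩
  intro ε R z hε hR hz hzc
  have hρ : 0 < ε + R := by linarith
  have hAz : A * z ≤ a / 2 * (ε + R) := by
    calc A * z ≤ A * (2 * c * (ε + R)) := by gcongr
      _ = c * (4 * A) / 2 * (ε + R) := by ring
      _ ≤ a / 2 * (ε + R) := by gcongr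
  have hLz : L * z ≤ b / 2 * (ε + R) := by
    calc L * z ≤ L * (2 * c * (ε + R)) := by gcongr
      _ = c * (4 * L) / 2 * (ε + R) := by ring
      _ ≤ b / 2 * (ε + R) := by gcongr
  have h1 : a * (ε + R) ≤ κ * ε + R := by
    nlinarith [mul_le_mul_of_nonneg_right (min_le_left κ 1) hε.le,
      mul_le_mul_of_nonneg_right (min_le_right κ 1) hR]
  have h2 : b * (ε + R) ≤ M * κ * ε + (M - K) * R := by
    nlinarith [mul_le_mul_of_nonneg_right (min_le_right (M - K) (M * κ)) hε.le,
      mul_le_mul_of_nonneg_right (min_le_left (M - K) (M * κ)) hR]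
  have h3 : 0 < b * (ε + R) := by positivity
  constructor
  · linarith
  · have : (κ * ε + R - A * z) * M - K * (R + A ^ 2 * z) =
        M * κ * ε + (M - K) * R - L * z := by rw [hL]; ring
    linarith

/-- The radial derivative of the barrier on the boundary spheres of the neck, where `σ = ± (1 + ε)`
is the height of the centre. -/
lemma two_mul_barrier_lt_radial {n : ℕ} (m : Fin n) {A β κ ε σ : ℝ} (hA : 0 < A) (hβ0 : 0 < β)
    (hβ1 : β < 1) (hAβ : 2 < β * (2 + A)) (hκ : κ < A * β) (hε : 0 < ε)
    (hσ : σ ^ 2 = (1 + ε) ^ 2) {x : EuclideanSpace ℝ (Fin n)}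
    (hR : 0 ≤ ‖x‖ ^ 2 - x m ^ 2) (hx : ‖x - σ • EuclideanSpace.single m (1 : ℝ)‖ = 1) :
    2 * barrier m (κ * ε) A x <
      β * fderiv ℝ (barrier m (κ * ε) A) x (x - σ • EuclideanSpace.single m (1 : ℝ)) := by
  have h1 := norm_sub_smul_single_sq m σ x
  rw [hx, hσ] at h1
  have h2 : fderiv ℝ (barrier m (κ * ε) A) x (x - σ • EuclideanSpace.single m (1 : ℝ)) =
      (2 + A) * (‖x‖ ^ 2 - x m ^ 2) + A * (2 * ε + ε ^ 2) - A * x m ^ 2 := by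
    rw [fderiv_barrier_apply, inner_sub_right, inner_smul_right,
      EuclideanSpace.inner_single_right, real_inner_self_eq_norm_sq]
    simp
    nlinarith
  rw [h2, barrier]
  set R := ‖x‖ ^ 2 - x m ^ 2 with hRd
  have h3 : ‖x‖ ^ 2 = R + x m ^ 2 := by ring
  rw [h3]
  have h4 : 0 ≤ (β * (2 + A) - 2) * R := mul_nonneg (by linarith) hR
  have h5 : 0 < (A * β - κ) * ε := mul_pos (by linarith) hε
  have h6 : 0 ≤ β * A * ε ^ 2 := by positivity
  have h7 : 0 ≤ (2 - β) * A * x m ^ 2 := mul_nonneg (mul_nonneg (by linarith) hA.le) (sq_nonneg _)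
  nlinarith

/-- The maximum-principle form of the main gradient estimate (Theorem 1.1): for `n ≥ 4` and
`0 < γ < γ*(n)` there are constants `c ∈ (0,1/2)`, `ε₀ ∈ (0,1)`, `C > 0`, depending only on
`n` and `γ`, such that for every `ε ∈ (0,ε₀)` and every `u` which is `C²` on an open set
containing the narrow region `V = {‖x‖ ≤ c} \ (int B⁺ ∪ int B⁻)`, harmonic in the interior
of `V`, and satisfying the homogeneous Neumann conditions on `∂B⁺ ∩ V` and `∂B⁻ ∩ V`, one
has `(ε + |x'|²)^{1−γ} ‖∇u(x)‖² ≤ C · sup{‖∇u(y)‖² : y ∈ V, ‖y‖ = c}` for all `x ∈ V`. -/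
theorem main_gradient_estimate (n : ℕ) (hn : 4 ≤ n) (γ : ℝ) (hγ0 : 0 < γ)
    (hγ : γ < gammaStar n) :
    ∃ c ε₀ C : ℝ, 0 < c ∧ c < 1 / 2 ∧ 0 < ε₀ ∧ ε₀ < 1 ∧ 0 < C ∧
      ∀ ε : ℝ, 0 < ε → ε < ε₀ →
      ∀ u : EuclideanSpace ℝ (Fin n) → ℝ,
      ∀ V : Set (EuclideanSpace ℝ (Fin n)),
      V = {x | ‖x‖ ≤ c ∧
            1 ≤ ‖x - (1 + ε) • EuclideanSpace.single (⟨n - 1, by omega⟩ : Fin n) (1 : ℝ)‖ ∧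
            1 ≤ ‖x + (1 + ε) • EuclideanSpace.single (⟨n - 1, by omega⟩ : Fin n) (1 : ℝ)‖} →
      (∃ U : Set (EuclideanSpace ℝ (Fin n)), IsOpen U ∧ V ⊆ U ∧ ContDiffOn ℝ 2 u U) →
      (∀ x ∈ interior V,
        ∑ i : Fin n, fderiv ℝ (fun y => fderiv ℝ u y (EuclideanSpace.single i (1 : ℝ))) x
          (EuclideanSpace.single i (1 : ℝ)) = 0) →
      (∀ x ∈ V, ‖x - (1 + ε) • EuclideanSpace.single (⟨n - 1, by omega⟩ : Fin n) (1 : ℝ)‖ = 1 →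
        ⟪gradient u x,
          x - (1 + ε) • EuclideanSpace.single (⟨n - 1, by omega⟩ : Fin n) (1 : ℝ)⟫ = 0) →
      (∀ x ∈ V, ‖x + (1 + ε) • EuclideanSpace.single (⟨n - 1, by omega⟩ : Fin n) (1 : ℝ)‖ = 1 →
        ⟪gradient u x,
          x + (1 + ε) • EuclideanSpace.single (⟨n - 1, by omega⟩ : Fin n) (1 : ℝ)⟫ = 0) →
      ∀ x ∈ V,
        (ε + ∑ i ∈ Finset.univ.erase (⟨n - 1, by omega⟩ : Fin n), (x i) ^ 2) ^ (1 - γ) *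
            ‖gradient u x‖ ^ 2 ≤
          C * sSup ((fun y => ‖gradient u y‖ ^ 2) '' {y ∈ V | ‖y‖ = c}) := by
  have hβ1 := lt_one_of_lt_gammaStar hn hγ0 hγ
  obtain ⟨A, hA, hAβ, hAn⟩ := exists_barrier_coefficient hn hγ0 hγ
  have hn' : (4 : ℝ) ≤ n := by exact_mod_cast hn
  set β : ℝ := 1 - γ with hβ
  have hβ0 : 0 < β := by linarith
  set K : ℝ := 2 + β * ((n : ℝ) - 2) / ((n : ℝ) - 1) with hK
  have hK0 : 0 < K := by
    have : 0 ≤ β * ((n : ℝ) - 2) / ((n : ℝ) - 1) :=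
      div_nonneg (mul_nonneg hβ0.le (by linarith)) (by linarith)
    linarith
  set κ : ℝ := A * β / 2 with hκ
  have hAβ0 : 0 < A * β := mul_pos hA hβ0
  obtain ⟨c, μ, hc0, hc1, hμ, hcμ⟩ := exists_neck_radius hA (κ := κ) (by positivity) hK0 hAn
  refine ⟨c, 1 / 2, ((κ + 1) / μ) ^ β, hc0, hc1, by norm_num, by norm_num, by positivity, ?_⟩
  intro ε hε hε1 u V hV hU hΔ hN₁ hN₂ x hx
  obtain ⟨U, hUo, hVU, huU⟩ := hU
  set m : Fin n := ⟨n - 1, by omega⟩ with hm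
  set e : EuclideanSpace ℝ (Fin n) := EuclideanSpace.single m (1 : ℝ) with he
  have hu : ∀ y ∈ V, ContDiffAt ℝ 2 u y := fun y hy => huU.contDiffAt (hUo.mem_nhds (hVU hy))
  have hVmem : ∀ y, y ∈ V ↔ ‖y‖ ≤ c ∧ 1 ≤ ‖y - (1 + ε) • e‖ ∧ 1 ≤ ‖y + (1 + ε) • e‖ := by
    intro y; rw [hV]; rfl
  have hVσ : ∀ σ : ℝ, σ = 1 + ε ∨ σ = -(1 + ε) → ∀ y,
      y ∈ V ↔ ‖y‖ ≤ c ∧ 1 ≤ ‖y - σ • e‖ ∧ 1 ≤ ‖y + σ • e‖ := by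
    rintro σ (rfl | rfl) y
    · exact hVmem y
    · rw [hVmem, neg_smul, sub_neg_eq_add, ← sub_eq_add_neg, and_comm (a := 1 ≤ ‖y - _‖)]
  have hNσ : ∀ σ : ℝ, σ = 1 + ε ∨ σ = -(1 + ε) → ∀ y ∈ V, ‖y - σ • e‖ = 1 →
      ⟪gradient u y, y - σ • e⟫ = 0 := by
    rintro σ (rfl | rfl) y hy
    · exact hN₁ y hy
    · rw [neg_smul, sub_neg_eq_add]
      exact hN₂ y hy
  set f : EuclideanSpace ℝ (Fin n) → ℝ := barrier m (κ * ε) A with hf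
  have hfC : ContDiff ℝ 2 f := contDiff_barrier m (κ * ε) A
  have hfR : ∀ y, f y = κ * ε + (‖y‖ ^ 2 - y m ^ 2) - A * y m ^ 2 := fun y => by
    rw [hf, barrier]; ring
  have hRnn : ∀ y : EuclideanSpace ℝ (Fin n), 0 ≤ ‖y‖ ^ 2 - y m ^ 2 := fun y => by
    rw [← sum_erase_sq_eq]
    exact Finset.sum_nonneg fun i _ => sq_nonneg _
  have hbar : ∀ y ∈ V, μ * (ε + (‖y‖ ^ 2 - y m ^ 2)) ≤ f y ∧
      K * (‖y‖ ^ 2 - y m ^ 2 + A ^ 2 * y m ^ 2) < f y * ((n : ℝ) - 1 - A) := by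
    intro y hy
    have h := (hVmem y).1 hy
    rw [hfR]
    exact hcμ ε _ _ hε (hRnn y) (sq_nonneg _)
      (sq_coord_le_of_mem_neck m hc1 hε (by linarith) h.1 h.2.1 h.2.2)
  have hf0 : ∀ y ∈ V, 0 < f y := fun y hy =>
    lt_of_lt_of_le (mul_pos hμ (by linarith [hRnn y])) (hbar y hy).1
  have hVclosed : IsClosed V := by
    have h1 : IsClosed {y : EuclideanSpace ℝ (Fin n) | 1 ≤ ‖y - (1 + ε) • e‖} :=
      isClosed_le continuous_const (by fun_prop)
    have h2 : IsClosed {y : EuclideanSpace ℝ (Fin n) | 1 ≤ ‖y + (1 + ε) • e‖} :=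
      isClosed_le continuous_const (by fun_prop)
    rw [hV]
    exact (isClosed_le continuous_norm continuous_const).inter (h1.inter h2)
  have hVcpt : IsCompact V :=
    (isCompact_closedBall (0 : EuclideanSpace ℝ (Fin n)) c).of_isClosed_subset hVclosed
      fun y hy => by simpa using ((hVmem y).1 hy).1
  have hvC : ContinuousOn (fun y => ‖gradient u y‖ ^ 2) V := fun y hy =>
    ((hu y hy).differentiableAt_gradient.continuousAt.norm.pow 2).continuousWithinAt
  have hQC : ContinuousOn (fun y => f y ^ β * ‖gradient u y‖ ^ 2) V :=
    (hfC.continuous.continuousOn.rpow_const fun y hy => Or.inl (hf0 y hy).ne').mul hvC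
  obtain ⟨z, hz, hzmax⟩ := hVcpt.exists_isMaxOn ⟨x, hx⟩ hQC
  set S : ℝ := sSup ((fun y => ‖gradient u y‖ ^ 2) '' {y ∈ V | ‖y‖ = c}) with hS
  have hS0 : 0 ≤ S := by
    refine Real.sSup_nonneg ?_
    rintro _ ⟨y, _, rfl⟩
    positivity
  have hfle : ∀ y ∈ V, f y ≤ κ + 1 := by
    intro y hy
    rw [hfR]
    have h1 := ((hVmem y).1 hy).1
    have h2 : ‖y‖ ^ 2 ≤ 1 := by nlinarith [norm_nonneg y]
    have h3 : κ * ε ≤ κ := mul_le_of_le_one_right (by positivity) (by linarith)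
    have h4 : 0 ≤ A * y m ^ 2 := by positivity
    nlinarith [sq_nonneg (y m)]
  -- no nonzero interior or spherical maximum
  have hzS : f z ^ β * ‖gradient u z‖ ^ 2 ≤ (κ + 1) ^ β * S := by
    by_cases hg : gradient u z = 0
    · rw [hg]
      have : 0 ≤ (κ + 1) ^ β := by positivity
      simpa using mul_nonneg this hS0
    obtain ⟨hz1, hz2, hz3⟩ := (hVmem z).1 hz
    rcases hz1.eq_or_lt with hzc | hzc
    · have h1 : ‖gradient u z‖ ^ 2 ≤ S :=
        le_csSup ((hVcpt.bddAbove_image hvC).mono (image_mono fun y hy => hy.1))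
          ⟨z, ⟨hz, hzc⟩, rfl⟩
      have := (hf0 z hz).le
      gcongr
      exact hfle z hz
    exfalso
    have hσ : ∀ σ : ℝ, σ = 1 + ε ∨ σ = -(1 + ε) → ‖z - σ • e‖ ≠ 1 := by
      intro σ hσ hz1
      have hσ2 : σ ^ 2 = (1 + ε) ^ 2 := by rcases hσ with rfl | rfl <;> ring
      have hother : 1 < ‖z + σ • e‖ := by
        have h1 : (z + σ • e) - (z - σ • e) = (2 * σ) • e := by module
        have h2 := norm_sub_le (z + σ • e) (z - σ • e)
        have h3 : |σ| = 1 + ε := by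
          rw [← abs_of_pos (show 0 < 1 + ε by linarith), ← sq_eq_sq_iff_abs_eq_abs, hσ2]
        rw [h1, norm_smul, hz1, Real.norm_eq_abs, abs_mul, h3, he] at h2
        simp at h2
        linarith
      have hnear : ∀ᶠ y in 𝓝 z, ‖y‖ < c ∧ 1 < ‖y + σ • e‖ :=
        (continuous_norm.continuousAt.eventually (gt_mem_nhds hzc)).and
          ((by fun_prop : Continuous fun y => ‖y + σ • e‖).continuousAt.eventually
            (lt_mem_nhds hother))
      have hNz : ∀ᶠ y in 𝓝 z, ‖y - σ • e‖ = 1 → ⟪gradient u y, y - σ • e⟫ = 0 :=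
        hnear.mono fun y hy hy1 =>
          hNσ σ hσ y ((hVσ σ hσ y).2 ⟨hy.1.le, hy1.ge, hy.2.le⟩) hy1
      have hle := radial_fderiv_le_of_boundary_max (β := β) (hu z hz)
        (hfC.contDiffAt.differentiableAt (by simp)) (hf0 z hz) hg hz1 hNz (by
          have hl : Tendsto (fun t : ℝ => z + t • (z - σ • e)) (𝓝[>] 0) (𝓝 z) := by
            have : Continuous fun t : ℝ => z + t • (z - σ • e) := by fun_prop
            exact tendsto_nhdsWithin_of_tendsto_nhds (by simpa using this.tendsto 0)
          filter_upwards [hl.eventually hnear, self_mem_nhdsWithin] with t ht ht0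
          refine hzmax ((hVσ σ hσ _).2 ⟨ht.1.le, ?_, ht.2.le⟩)
          have h1 : z + t • (z - σ • e) - σ • e = (1 + t) • (z - σ • e) := by module
          have ht0' : (0 : ℝ) < t := ht0
          rw [h1, norm_smul, hz1, Real.norm_of_nonneg (by linarith)]
          linarith)
      exact absurd hle (not_le.2 (two_mul_barrier_lt_radial m hA hβ0 (by linarith) hAβ
        (by linarith) hε hσ2 (hRnn z) hz1))
    have hz2' : 1 < ‖z - (1 + ε) • e‖ := lt_of_le_of_ne hz2 (hσ _ (Or.inl rfl)).symm
    have hz3' : 1 < ‖z + (1 + ε) • e‖ := by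
      refine lt_of_le_of_ne hz3 fun h => hσ _ (Or.inr rfl) ?_
      rw [neg_smul, sub_neg_eq_add]
      exact h.symm
    have hzV : ∀ᶠ y in 𝓝 z, y ∈ V := by
      filter_upwards [continuous_norm.continuousAt.eventually (gt_mem_nhds hzc),
        (by fun_prop : Continuous fun y => ‖y - (1 + ε) • e‖).continuousAt.eventually
          (lt_mem_nhds hz2'),
        (by fun_prop : Continuous fun y => ‖y + (1 + ε) • e‖).continuousAt.eventually
          (lt_mem_nhds hz3')] with y h1 h2 h3
      exact (hVmem y).2 ⟨h1.le, h2.le, h3.le⟩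
    have hloc : IsLocalMax
        (fun y => f y ^ β * ∑ i, (fderiv ℝ u y (EuclideanSpace.single i 1)) ^ 2) z := by
      simp_rw [← gradient_norm_sq_eq_sum]
      exact hzV.mono fun y hy => hzmax hy
    have hΔz : ∀ᶠ y in 𝓝 z, ∑ k, sndDirDeriv (EuclideanSpace.single k (1 : ℝ)) u y = 0 :=
      (eventually_mem_nhds_iff.2 hzV).mono fun y hy => hΔ y (mem_interior_iff_mem_nhds.2 hy)
    have hle := laplacian_le_of_isLocalMax_rpow (by omega) hβ0 (hu z hz) hΔz hfC.contDiffAt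
      (hf0 z hz) (by rw [← gradient_norm_sq_eq_sum]; positivity) hloc
    rw [hf, sum_sndDirDeriv_barrier, sum_sq_fderiv_barrier, ← hf] at hle
    have hlt := (hbar z hz).2
    have hn1 : (0 : ℝ) < (n : ℝ) - 1 := by linarith
    have hK' : 2 * ((n : ℝ) - 1) + β * (n - 2) = ((n : ℝ) - 1) * K := by
      rw [hK]
      field_simp
    rw [hK'] at hle
    have := mul_lt_mul_of_pos_left hlt hn1
    linarith
  have hxz : f x ^ β * ‖gradient u x‖ ^ 2 ≤ (κ + 1) ^ β * S := (hzmax hx).trans hzS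
  have hfx := (hbar x hx).1
  rw [sum_erase_sq_eq, Real.div_rpow (by positivity) hμ.le, div_mul_eq_mul_div,
    le_div_iff₀ (by positivity)]
  refine le_trans ?_ hxz
  have hρ : 0 ≤ ε + (‖x‖ ^ 2 - x m ^ 2) := by linarith [hRnn x]
  calc (ε + (‖x‖ ^ 2 - x m ^ 2)) ^ β * ‖gradient u x‖ ^ 2 * μ ^ β
      = (μ * (ε + (‖x‖ ^ 2 - x m ^ 2))) ^ β * ‖gradient u x‖ ^ 2 := by
        rw [Real.mul_rpow hμ.le hρ]; ring
    _ ≤ f x ^ β * ‖gradient u x‖ ^ 2 := by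
        gcongr
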